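/- arXiv:math/0404348 — 4 statements merged into one kernel-verified Lean document; each statement's English description precedes it below -/
import Mathlib

section
/- For any k-tensor T on ℝ^n, any n×n matrices H₁,…,H_k, any orthogonal n×n matrix V, and any permutation σ on {1,…,k}, the identity ⟨T, (VᵀH₁V) ∘_σ ⋯ ∘_σ (VᵀH_kV)⟩ = (V(Diag^σ T)Vᵀ)[H₁,…,H_k] holds. -/
open scoped BigOperators
open Filter Asymptotics Matrix

attribute [local instance] Matrix.normedAddCommGroup

noncomputable section

/-- A `k`-tensor on `ℝ^n`, identified with its array of entries. -/
abbrev Tensor (k n : ℕ) : Type := (Fin k → Fin n) → ℝ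

/-- A `2k`-tensor on `ℝ^n`, with its indices grouped into two groups of `k`. -/
abbrev Tensor2 (k n : ℕ) : Type := (Fin k → Fin n) → (Fin k → Fin n) → ℝ

/-- The `σ`-Hadamard product of `k` matrices:
`(H₁ ∘_σ ⋯ ∘_σ H_k)^{i₁…i_k} = ∏ s, H_s^{i_s i_{σ⁻¹(s)}}`. -/
def hadamardProd {k n : ℕ} (σ : Equiv.Perm (Fin k))
    (H : Fin k → Matrix (Fin n) (Fin n) ℝ) : Tensor k n :=
  fun i => ∏ s, H s (i s) (i (σ⁻¹ s))

/-- The dot product of two `k`-tensors. -/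
def tdot {k n : ℕ} (T₁ T₂ : Tensor k n) : ℝ :=
  ∑ p : Fin k → Fin n, T₁ p * T₂ p

/-- `Diag^σ T`, the `2k`-tensor equal to `T^{i₁…i_k}` when `i_s = j_{σ(s)}` for all `s`,
and `0` otherwise. -/
def diagPerm {k n : ℕ} (σ : Equiv.Perm (Fin k)) (T : Tensor k n) : Tensor2 k n :=
  fun i j => if ∀ s, i s = j (σ s) then T i else 0

/-- A `2k`-tensor viewed as a `k`-tensor on matrix arguments:
`S[H₁,…,H_k] = ∑_{p,q} S^{p₁…p_k}_{q₁…q_k} ∏ s, H_s^{p_s q_s}`. -/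
def apply2 {k n : ℕ} (S : Tensor2 k n)
    (H : Fin k → Matrix (Fin n) (Fin n) ℝ) : ℝ :=
  ∑ p : Fin k → Fin n, ∑ q : Fin k → Fin n, S p q * ∏ s, H s (p s) (q s)

/-- Conjugation `U S Uᵀ` of a `2k`-tensor `S` by a matrix `U`. -/
def conj2 {k n : ℕ} (U : Matrix (Fin n) (Fin n) ℝ) (S : Tensor2 k n) : Tensor2 k n :=
  fun i j => ∑ p : Fin k → Fin n, ∑ q : Fin k → Fin n,
    S p q * ((∏ s, U (i s) (p s)) * ∏ s, U (j s) (q s))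

/-- For a `2(k+1)`-tensor `S` viewed as a `(k+1)`-tensor on matrices, `S[H]` fixes the last
matrix argument to `H`, producing a `2k`-tensor. -/
def lastApply {k n : ℕ} (S : Tensor2 (k+1) n)
    (H : Matrix (Fin n) (Fin n) ℝ) : Tensor2 k n :=
  fun i j => ∑ a : Fin n, ∑ b : Fin n, S (Fin.snoc i a) (Fin.snoc j b) * H a b

/-- `T[x]`: contraction of the last index of a `(k+1)`-tensor against a vector. -/
def contract {k n : ℕ} (T : Tensor (k+1) n) (x : Fin n → ℝ) : Tensor k n :=
  fun i => ∑ a : Fin n, T (Fin.snoc i a) * x a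

/-- A permutation `σ` of `{1,…,k}` viewed as a permutation of `{1,…,k+1}` fixing `k+1`. -/
def extPerm {k : ℕ} (σ : Equiv.Perm (Fin k)) : Equiv.Perm (Fin (k+1)) :=
  (Equiv.permCongr finSuccEquivLast).symm σ.optionCongr

/-- `σ_{(l)} := σ ∘ τ_l`, where `τ_l` is the transposition `(l, k+1)` (and `σ` fixes `k+1`).
Here `l : Fin (k+1)`; taking `l = Fin.last k` gives `σ_{(k+1)} = σ`. -/
def permIns {k : ℕ} (σ : Equiv.Perm (Fin k)) (l : Fin (k+1)) : Equiv.Perm (Fin (k+1)) :=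
  extPerm σ * Equiv.swap l (Fin.last k)

/-- A tensor is `μ`-block-constant if its entries agree on componentwise `μ`-equivalent
multi-indices (`i ∼ j` iff `μ i = μ j`). -/
def BlockConstant {k n : ℕ} (μ : Fin n → ℝ) (T : Tensor k n) : Prop :=
  ∀ i j : Fin k → Fin n, (∀ s, μ (i s) = μ (j s)) → T i = T j

/-- `H_in`: the diagonal-block part of `H` (w.r.t. the blocks of `μ`). -/
def matIn {n : ℕ} (μ : Fin n → ℝ) (H : Matrix (Fin n) (Fin n) ℝ) :
    Matrix (Fin n) (Fin n) ℝ :=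
  Matrix.of fun i j => if μ i = μ j then H i j else 0

/-- `H_out = H - H_in`: the off-diagonal-block part of `H`. -/
def matOut {n : ℕ} (μ : Fin n → ℝ) (H : Matrix (Fin n) (Fin n) ℝ) :
    Matrix (Fin n) (Fin n) ℝ :=
  H - matIn μ H

/-- The divided-difference tensor `T^{(l)}_out` of a `k`-tensor `T`, a `(k+1)`-tensor. -/
def outDD {k n : ℕ} (μ : Fin n → ℝ) (T : Tensor k n) (l : Fin k) : Tensor (k+1) n :=
  fun i => if μ (i l.castSucc) = μ (i (Fin.last k)) then 0
    else (T (Function.update (fun s => i s.castSucc) l (i (Fin.last k)))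
          - T (fun s => i s.castSucc)) / (μ (i (Fin.last k)) - μ (i l.castSucc))

/-- `T^{τ_l}`: the `(k+1)`-tensor equal to `T^{i₁…i_k}` on the hyperplane `i_l = i_{k+1}`
and `0` elsewhere. -/
def liftTau {k n : ℕ} (T : Tensor k n) (l : Fin k) : Tensor (k+1) n :=
  fun i => if i l.castSucc = i (Fin.last k) then T (fun s => i s.castSucc) else 0

/-- `T^{τ_l}_in`: the "inflated" `(k+1)`-tensor, equal to
`T^{i₁…i_{l-1} i_{k+1} i_{l+1}…i_k}` when `μ_{i_l} = μ_{i_{k+1}}` and `0` otherwise. -/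
def liftTauIn {k n : ℕ} (μ : Fin n → ℝ) (T : Tensor k n) (l : Fin k) : Tensor (k+1) n :=
  fun i => if μ (i l.castSucc) = μ (i (Fin.last k))
    then T (Function.update (fun s => i s.castSucc) l (i (Fin.last k))) else 0

/-- `lam` is the map sending each symmetric matrix to the vector of its eigenvalues
ordered nonincreasingly: it is nonincreasing and realized by an orthogonal
diagonalization. -/
def IsEigCF {n : ℕ} (lam : Matrix (Fin n) (Fin n) ℝ → Fin n → ℝ) : Prop :=
  ∀ A : Matrix (Fin n) (Fin n) ℝ, A.IsSymm →
    Antitone (lam A) ∧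
    ∃ U : Matrix (Fin n) (Fin n) ℝ, Uᵀ * U = 1 ∧
      A = U * Matrix.diagonal (lam A) * Uᵀ

/-- `h` is the concatenated vector `(λ(X₁ᵀ A X₁), …, λ(X_rᵀ A X_r))` of the nonincreasingly
ordered eigenvalues of the diagonal blocks of `A` (blocks determined by `μ`):
equivalently, `h` is nonincreasing within each block of `μ` and `Diag h` is obtained from
`A_in` by conjugating with a block-diagonal orthogonal matrix. -/
def IsBlockEig {n : ℕ} (μ : Fin n → ℝ) (A : Matrix (Fin n) (Fin n) ℝ)
    (h : Fin n → ℝ) : Prop :=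
  (∀ i j : Fin n, i ≤ j → μ i = μ j → h j ≤ h i) ∧
  ∃ V : Matrix (Fin n) (Fin n) ℝ, Vᵀ * V = 1 ∧
    (∀ i j, μ i ≠ μ j → V i j = 0) ∧
    Vᵀ * matIn μ A * V = Matrix.diagonal h

/-!
Collect the products `∏ s, H_s^{p_s q_s}` into one matrix on multi-indices, the Kronecker product
`K(H)` of the family `H`. Then `S[H₁,…,H_k] = tr(S K(H)ᵀ)` and `U S Uᵀ = K(U) S K(U)ᵀ`, so
multiplicativity of `K` and cyclicity of the trace move a conjugation from the tensor to its
arguments: `(U S Uᵀ)[H₁,…,H_k] = S[UᵀH₁U,…,UᵀH_kU]`. Row `i` of `Diag^σ T` vanishes outside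
column `i ∘ σ⁻¹`, and therefore `(Diag^σ T)[H₁,…,H_k] = ⟨T, H₁ ∘_σ ⋯ ∘_σ H_k⟩`.
-/

section PiKronecker

variable {ι R : Type*} {l m n : ι → Type*} [Fintype ι]

/-- The Kronecker product of a finite family of matrices, with rows and columns indexed by
dependent functions. For a family of `k` square matrices, its entries are the monomials that the
entries of a `2k`-tensor `S` multiply in `S[H₁,…,H_k]`. -/
def piKronecker [CommMonoid R] (A : ∀ i, Matrix (m i) (n i) R) :
    Matrix (∀ i, m i) (∀ i, n i) R :=
  Matrix.of fun p q => ∏ i, A i (p i) (q i)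

theorem piKronecker_transpose [CommMonoid R] (A : ∀ i, Matrix (m i) (n i) R) :
    piKronecker (fun i => (A i)ᵀ) = (piKronecker A)ᵀ :=
  rfl

theorem piKronecker_mul [CommSemiring R] [DecidableEq ι] [∀ i, Fintype (m i)]
    (A : ∀ i, Matrix (l i) (m i) R) (B : ∀ i, Matrix (m i) (n i) R) :
    piKronecker (fun i => A i * B i) = piKronecker A * piKronecker B := by
  ext p q
  simp only [piKronecker, Matrix.of_apply, Matrix.mul_apply, Fintype.prod_sum,
    Finset.prod_mul_distrib]

end PiKronecker

section Tensor

variable {k n : ℕ}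

theorem apply2_eq_trace (S : Tensor2 k n) (H : Fin k → Matrix (Fin n) (Fin n) ℝ) :
    apply2 S H = (Matrix.of S * (piKronecker H)ᵀ).trace :=
  rfl

theorem of_conj2 (U : Matrix (Fin n) (Fin n) ℝ) (S : Tensor2 k n) :
    Matrix.of (conj2 U S) =
      piKronecker (fun _ => U) * Matrix.of S * (piKronecker fun _ => U)ᵀ := by
  ext i j
  simp only [conj2, piKronecker, Matrix.of_apply, Matrix.mul_apply, Matrix.transpose_apply,
    Finset.sum_mul]
  rw [Finset.sum_comm]
  refine Finset.sum_congr rfl fun q _ => Finset.sum_congr rfl fun p _ => ?_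
  ring

theorem apply2_conj2 (U : Matrix (Fin n) (Fin n) ℝ) (S : Tensor2 k n)
    (H : Fin k → Matrix (Fin n) (Fin n) ℝ) :
    apply2 (conj2 U S) H = apply2 S fun s => Uᵀ * H s * U := by
  set K : Matrix (Fin k → Fin n) (Fin k → Fin n) ℝ := piKronecker fun _ => U
  have hK : piKronecker (fun s => Uᵀ * H s * U) = Kᵀ * piKronecker H * K := by
    rw [piKronecker_mul, piKronecker_mul, piKronecker_transpose]
  calc
    apply2 (conj2 U S) H = (K * (Matrix.of S * (Kᵀ * (piKronecker H)ᵀ))).trace := by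
      rw [apply2_eq_trace, of_conj2]
      simp only [K, Matrix.mul_assoc]
    _ = (Matrix.of S * (Kᵀ * (piKronecker H)ᵀ * K)).trace := by
      rw [Matrix.trace_mul_comm, Matrix.mul_assoc]
    _ = (Matrix.of S * (Kᵀ * piKronecker H * K)ᵀ).trace := by
      simp only [Matrix.transpose_mul, Matrix.transpose_transpose, Matrix.mul_assoc]
    _ = apply2 S fun s => Uᵀ * H s * U := by
      rw [apply2_eq_trace, hK]

theorem diagPerm_apply (σ : Equiv.Perm (Fin k)) (T : Tensor k n) (i j : Fin k → Fin n) :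
    diagPerm σ T i j = if j = i ∘ ⇑σ⁻¹ then T i else 0 := by
  have column_eq_iff : (∀ s, i s = j (σ s)) ↔ j = i ∘ ⇑σ⁻¹ :=
    funext_iff.symm.trans (eq_comm.trans (Equiv.eq_comp_symm σ j i).symm)
  simp only [diagPerm, column_eq_iff]

theorem apply2_diagPerm (σ : Equiv.Perm (Fin k)) (T : Tensor k n)
    (H : Fin k → Matrix (Fin n) (Fin n) ℝ) :
    apply2 (diagPerm σ T) H = tdot T (hadamardProd σ H) := by
  simp only [apply2, tdot, hadamardProd, diagPerm_apply, ite_mul, zero_mul, Finset.sum_ite_eq',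
    Finset.mem_univ, if_true, Function.comp_apply]

theorem statement2_general (T : Tensor k n) (H : Fin k → Matrix (Fin n) (Fin n) ℝ)
    (V : Matrix (Fin n) (Fin n) ℝ) (σ : Equiv.Perm (Fin k)) :
    tdot T (hadamardProd σ fun s => Vᵀ * H s * V) = apply2 (conj2 V (diagPerm σ T)) H := by
  rw [apply2_conj2, apply2_diagPerm]

end Tensor

/-- Theorem `jen3a`. For any `k`-tensor `T`, matrices `H₁,…,H_k`,
orthogonal `V`, and permutation `σ` of `{1,…,k}`:
`⟨T, (VᵀH₁V) ∘_σ ⋯ ∘_σ (VᵀH_kV)⟩ = (V(Diag^σ T)Vᵀ)[H₁,…,H_k]`. -/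
theorem statement2 {n k : ℕ} (T : Tensor k n)
    (H : Fin k → Matrix (Fin n) (Fin n) ℝ)
    (V : Matrix (Fin n) (Fin n) ℝ) (hV : Vᵀ * V = 1)
    (σ : Equiv.Perm (Fin k)) :
    tdot T (hadamardProd σ (fun s => Vᵀ * H s * V))
      = apply2 (conj2 V (diagPerm σ T)) H :=
  statement2_general T H V σ

end
end

section
/- Let μ ∈ ℝ^n with μ₁ ≥ μ₂ ≥ … ≥ μ_n, and let I₁,…,I_r be the blocks of consecutive indices on which μ is constant. For l = 1,…,r let X_l be the n×|I_l| matrix whose columns are the standard basis vectors e^i for i ∈ I_l. Then for any sequence of n×n symmetric matrices M_m → 0, λ(Diag μ + M_m) = μ + (λ(X₁ᵀM_mX₁), …, λ(X_rᵀM_mX_r)) + o(‖M_m‖), where λ(·) denotes the vector of eigenvalues of a symmetric matrix ordered nonincreasingly and Diag μ is the diagonal matrix with μ on its diagonal. -/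
open scoped BigOperators
open Filter Asymptotics Matrix

attribute [local instance] Matrix.normedAddCommGroup

noncomputable section

/-!
Write `H_in` for the part of `H` in the diagonal blocks of `μ`. Since `μ i - μ j ≠ 0` off these
blocks, some skew-symmetric `L = O(‖M‖)` has a commutator with `Diag μ` that cancels the rest of
`M`, so conjugation by the Cayley transform of `L` turns `Diag μ + M` into
`Diag μ + M_in + O(‖M‖²)`. By Weyl's inequality the ordered eigenvalues of the two
matrices differ by `O(‖M‖²)`. The eigenvalues of `Diag μ + M_in` are the entries of `μ + h`,
and once `M` is small compared with the gaps of `μ`, this vector is nonincreasing.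
-/

section MatrixNorm

variable {l m n : Type*} [Fintype l] [Fintype m] [Fintype n]

lemma norm_matrix_mul_le {R : Type*} [NonUnitalNormedRing R] (A : Matrix l m R)
    (B : Matrix m n R) : ‖A * B‖ ≤ Fintype.card m * (‖A‖ * ‖B‖) := by
  refine (Matrix.norm_le_iff (by positivity)).2 fun i k => ?_
  calc ‖∑ j, A i j * B j k‖ ≤ ∑ j, ‖A i j * B j k‖ := norm_sum_le _ _
    _ ≤ ∑ _j : m, ‖A‖ * ‖B‖ := Finset.sum_le_sum fun j _ => (norm_mul_le _ _).trans <| by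
        gcongr <;> exact Matrix.norm_entry_le_entrywise_sup_norm _
    _ = Fintype.card m * (‖A‖ * ‖B‖) := by simp

lemma isBigO_matrix_mul {R α : Type*} [NonUnitalNormedRing R] {F : Filter α}
    {A : α → Matrix l m R} {B : α → Matrix m n R} {f g : α → ℝ} (hA : A =O[F] f)
    (hB : B =O[F] g) : (fun a => A a * B a) =O[F] fun a => f a * g a :=
  (IsBigO.of_bound (Fintype.card m) <| .of_forall fun a => by
    simpa using norm_matrix_mul_le (A a) (B a)).trans (hA.norm_left.mul hB.norm_left)

lemma dotProduct_mulVec_le_card_mul_norm (A : Matrix n n ℝ) (x : n → ℝ) :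
    x ⬝ᵥ A *ᵥ x ≤ Fintype.card n * ‖A‖ * (x ⬝ᵥ x) := by
  have hterm (i j : n) : x i * (A i j * x j) ≤ ‖A‖ * (|x i| * |x j|) := by
    calc x i * (A i j * x j) ≤ |x i * (A i j * x j)| := le_abs_self _
      _ = ‖A i j‖ * (|x i| * |x j|) := by rw [abs_mul, abs_mul, Real.norm_eq_abs]; ring
      _ ≤ ‖A‖ * (|x i| * |x j|) := by
        gcongr
        exact Matrix.norm_entry_le_entrywise_sup_norm A
  calc x ⬝ᵥ A *ᵥ x = ∑ i, ∑ j, x i * (A i j * x j) := by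
        simp only [dotProduct, mulVec, Finset.mul_sum]
    _ ≤ ∑ i, ∑ j, ‖A‖ * (|x i| * |x j|) :=
        Finset.sum_le_sum fun i _ => Finset.sum_le_sum fun j _ => hterm i j
    _ = ‖A‖ * (∑ i, |x i|) ^ 2 := by
        rw [sq, Finset.sum_mul_sum]
        simp only [Finset.mul_sum]
    _ ≤ ‖A‖ * (Fintype.card n * ∑ i, |x i| ^ 2) := by
        gcongr
        exact sq_sum_le_card_mul_sum_sq
    _ = Fintype.card n * ‖A‖ * (x ⬝ᵥ x) := by
        simp only [sq_abs, dotProduct, ← sq]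
        ring

lemma norm_le_one_of_transpose_mul_self_eq_one [DecidableEq n] {U : Matrix n n ℝ}
    (hU : Uᵀ * U = 1) : ‖U‖ ≤ 1 :=
  entrywise_sup_norm_bound_of_unitary (𝕜 := ℝ) <| mem_unitaryGroup_iff'.2 <| by
    rwa [star_eq_conjTranspose, conjTranspose_eq_transpose_of_trivial]

end MatrixNorm

section Weyl

lemma exists_ne_zero_mulVec_eq_zero_on {K l m n : Type*} [Field K] [Fintype n]
    (A : Matrix l n K) (B : Matrix m n K) (S : Finset l) (T : Finset m)
    (hcard : S.card + T.card < Fintype.card n) :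
    ∃ x ≠ 0, (∀ i ∈ S, (A *ᵥ x) i = 0) ∧ ∀ j ∈ T, (B *ᵥ x) j = 0 := by
  let C : Matrix (S ⊕ T) n K := fromRows (A.submatrix (↑) id) (B.submatrix (↑) id)
  have hker : LinearMap.ker C.mulVecLin ≠ ⊥ :=
    LinearMap.ker_ne_bot_of_finrank_lt (by simpa using hcard)
  obtain ⟨x, hx, hx0⟩ := (Submodule.ne_bot_iff _).1 hker
  exact ⟨x, hx0, fun i hi => congrFun hx (.inl ⟨i, hi⟩), fun j hj => congrFun hx (.inr ⟨j, hj⟩)⟩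

variable {ι : Type*} [Fintype ι] [DecidableEq ι]

lemma dotProduct_conj_diagonal_mulVec {R : Type*} [CommSemiring R] (U : Matrix ι ι R)
    (a x : ι → R) : x ⬝ᵥ (U * diagonal a * Uᵀ) *ᵥ x = ∑ k, a k * (Uᵀ *ᵥ x) k ^ 2 := by
  rw [← mulVec_mulVec, ← mulVec_mulVec, dotProduct_mulVec, ← mulVec_transpose]
  simp only [dotProduct, mulVec_diagonal]
  exact Finset.sum_congr rfl fun k _ => by ring

lemma sum_sq_transpose_mulVec {R : Type*} [CommRing R] {U : Matrix ι ι R} (hU : Uᵀ * U = 1)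
    (x : ι → R) : ∑ k, (Uᵀ *ᵥ x) k ^ 2 = x ⬝ᵥ x := by
  simpa [mul_eq_one_comm.1 hU] using (dotProduct_conj_diagonal_mulVec U 1 x).symm

section OrderedRing

variable {R : Type*} [CommRing R] [LinearOrder R] [IsStrictOrderedRing R]

lemma mul_dotProduct_self_le_of_lt_imp_eq_zero {U : Matrix ι ι R} (hU : Uᵀ * U = 1)
    {a x : ι → R} {c : R} (hx : ∀ k, a k < c → (Uᵀ *ᵥ x) k = 0) :
    c * (x ⬝ᵥ x) ≤ x ⬝ᵥ (U * diagonal a * Uᵀ) *ᵥ x := by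
  rw [dotProduct_conj_diagonal_mulVec, ← sum_sq_transpose_mulVec hU, Finset.mul_sum]
  refine Finset.sum_le_sum fun k _ => ?_
  rcases lt_or_ge (a k) c with hk | hk
  · simp [hx k hk]
  · gcongr

lemma le_mul_dotProduct_self_of_lt_imp_eq_zero {U : Matrix ι ι R} (hU : Uᵀ * U = 1)
    {a x : ι → R} {c : R} (hx : ∀ k, c < a k → (Uᵀ *ᵥ x) k = 0) :
    x ⬝ᵥ (U * diagonal a * Uᵀ) *ᵥ x ≤ c * (x ⬝ᵥ x) := by
  rw [dotProduct_conj_diagonal_mulVec, ← sum_sq_transpose_mulVec hU, Finset.mul_sum]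
  refine Finset.sum_le_sum fun k _ => ?_
  rcases lt_or_ge c (a k) with hk | hk
  · simp [hx k hk]
  · gcongr

end OrderedRing

/-- `a` lists the eigenvalues of the real symmetric matrix `A`, with multiplicity, in nonincreasing
order. The orthogonal diagonalization is phrased as in `IsEigCF`, so that `IsEigCF lam` says exactly
that every symmetric `A` satisfies `IsOrderedSpectrum A (lam A)`. -/
def IsOrderedSpectrum [Preorder ι] (A : Matrix ι ι ℝ) (a : ι → ℝ) : Prop :=
  Antitone a ∧ ∃ U : Matrix ι ι ℝ, Uᵀ * U = 1 ∧ A = U * diagonal a * Uᵀ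

namespace IsOrderedSpectrum

lemma conj [Preorder ι] {A Q : Matrix ι ι ℝ} {a : ι → ℝ} (hA : IsOrderedSpectrum A a)
    (hQ : Qᵀ * Q = 1) : IsOrderedSpectrum (Qᵀ * A * Q) a := by
  obtain ⟨ha, U, hU, rfl⟩ := hA
  refine ⟨ha, Qᵀ * U, ?_, ?_⟩
  · rw [transpose_mul, transpose_transpose, Matrix.mul_assoc, ← Matrix.mul_assoc Q,
      mul_eq_one_comm.1 hQ, Matrix.one_mul, hU]
  · simp only [transpose_mul, transpose_transpose, Matrix.mul_assoc]

variable [LinearOrder ι] {A B : Matrix ι ι ℝ} {a b : ι → ℝ}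

-- Courant–Fischer: the span of the eigenvectors of `A` up to index `i` and that of the eigenvectors
-- of `B` from index `i` on have dimensions adding up to more than `card ι`, so they intersect.
lemma le_add_of_dotProduct_mulVec_le (hA : IsOrderedSpectrum A a) (hB : IsOrderedSpectrum B b)
    {c : ℝ} (hAB : ∀ x, x ⬝ᵥ A *ᵥ x ≤ x ⬝ᵥ B *ᵥ x + c * (x ⬝ᵥ x)) (i : ι) : a i ≤ b i + c := by
  obtain ⟨ha, U, hU, rfl⟩ := hA
  obtain ⟨hb, V, hV, rfl⟩ := hB
  have hcard : (Finset.univ.filter (i < ·)).card + (Finset.univ.filter (· < i)).card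
      < Fintype.card ι := by
    rw [← Finset.card_union_of_disjoint]
    · exact Finset.card_lt_univ_of_notMem (x := i) (by simp)
    · exact Finset.disjoint_filter.2 fun k _ hik hki => lt_asymm hik hki
  obtain ⟨x, hx0, hxU, hxV⟩ := exists_ne_zero_mulVec_eq_zero_on Uᵀ Vᵀ _ _ hcard
  have hlower := mul_dotProduct_self_le_of_lt_imp_eq_zero hU (a := a) (c := a i) fun k hk =>
    hxU k <| by simpa using ha.reflect_lt hk
  have hupper := le_mul_dotProduct_self_of_lt_imp_eq_zero hV (a := b) (c := b i) fun k hk =>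
    hxV k <| by simpa using hb.reflect_lt hk
  have hpos : 0 < x ⬝ᵥ x := by simpa using dotProduct_star_self_pos_iff.2 hx0
  exact le_of_mul_le_mul_right (by linarith [hAB x]) hpos

lemma le_add_card_mul_norm_sub (hA : IsOrderedSpectrum A a) (hB : IsOrderedSpectrum B b) (i : ι) :
    a i ≤ b i + Fintype.card ι * ‖A - B‖ := by
  refine hA.le_add_of_dotProduct_mulVec_le hB (fun x => ?_) i
  have := dotProduct_mulVec_le_card_mul_norm (A - B) x
  rw [sub_mulVec, dotProduct_sub] at this
  linarith

lemma norm_sub_le (hA : IsOrderedSpectrum A a) (hB : IsOrderedSpectrum B b) :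
    ‖a - b‖ ≤ Fintype.card ι * ‖A - B‖ := by
  refine (pi_norm_le_iff_of_nonneg (by positivity)).2 fun i => abs_le.2 ⟨?_, ?_⟩
  · have := hB.le_add_card_mul_norm_sub hA i
    rw [norm_sub_rev] at this
    rw [Pi.sub_apply]
    linarith
  · have := hA.le_add_card_mul_norm_sub hB i
    rw [Pi.sub_apply]
    linarith

end IsOrderedSpectrum

end Weyl

section Cayley

variable {ι : Type*} [Fintype ι] [DecidableEq ι]

/-- The Cayley transform of a square matrix, orthogonal when `L` is skew-symmetric. When `1 - L` is
singular, the junk value of its inverse makes it `0`. -/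
def cayley {R : Type*} [CommRing R] (L : Matrix ι ι R) : Matrix ι ι R :=
  (1 + L) * (1 - L)⁻¹

section CommRing

variable {R : Type*} [CommRing R] {L : Matrix ι ι R}

lemma transpose_cayley (hL : Lᵀ = -L) : (cayley L)ᵀ = (1 - L)⁻¹ᵀ * (1 - L) := by
  rw [cayley, transpose_mul, transpose_add, transpose_one, hL, ← sub_eq_add_neg]

lemma transpose_inv_one_sub_mul (hL : Lᵀ = -L) (hdet : IsUnit (1 - L).det) :
    (1 - L)⁻¹ᵀ * (1 + L) = 1 := by
  have hadd : 1 + L = (1 - L)ᵀ := by rw [transpose_sub, transpose_one, hL, sub_neg_eq_add]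
  rw [hadd, ← transpose_mul, mul_nonsing_inv _ hdet, transpose_one]

lemma transpose_cayley_mul_cayley (hL : Lᵀ = -L) (hdet : IsUnit (1 - L).det) :
    (cayley L)ᵀ * cayley L = 1 := by
  have hcomm : (1 - L) * (1 + L) = (1 + L) * (1 - L) := by noncomm_ring
  calc (cayley L)ᵀ * cayley L = (1 - L)⁻¹ᵀ * ((1 - L) * (1 + L)) * (1 - L)⁻¹ := by
        rw [transpose_cayley hL, cayley]
        simp only [Matrix.mul_assoc]
    _ = (1 - L)⁻¹ᵀ * (1 + L) * ((1 - L) * (1 - L)⁻¹) := by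
        simp only [hcomm, Matrix.mul_assoc]
    _ = 1 := by
        rw [transpose_inv_one_sub_mul hL hdet, mul_nonsing_inv _ hdet, Matrix.one_mul]

-- The commutator equation for `L` cancels the first-order terms, leaving products of `L` with
-- `M` and `N`.
lemma cayley_conj_sub {D M N : Matrix ι ι R} (hL : Lᵀ = -L) (hdet : IsUnit (1 - L).det)
    (hcomm : 2 * (D * L - L * D) = N - M) :
    (cayley L)ᵀ * (D + M) * cayley L - (D + N) =
      (1 - L)⁻¹ᵀ * ((M + N) * L - L * (M + N) - L * (M - N) * L) * (1 - L)⁻¹ := by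
  have hDN : (1 - L)⁻¹ᵀ * ((1 + L) * (D + N) * (1 - L)) * (1 - L)⁻¹ = D + N := by
    simp only [← Matrix.mul_assoc, transpose_inv_one_sub_mul hL hdet, Matrix.one_mul,
      mul_nonsing_inv_cancel_right _ _ hdet]
  have hinner : (1 - L) * (D + M) * (1 + L) - (1 + L) * (D + N) * (1 - L) =
      (M + N) * L - L * (M + N) - L * (M - N) * L := by
    linear_combination (norm := noncomm_ring) hcomm
  calc (cayley L)ᵀ * (D + M) * cayley L - (D + N)
      = (1 - L)⁻¹ᵀ * ((1 - L) * (D + M) * (1 + L)) * (1 - L)⁻¹ - (D + N) := by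
        rw [transpose_cayley hL, cayley]
        simp only [Matrix.mul_assoc]
    _ = (1 - L)⁻¹ᵀ * ((1 - L) * (D + M) * (1 + L) - (1 + L) * (D + N) * (1 - L)) *
          (1 - L)⁻¹ := by
        rw [Matrix.mul_sub (1 - L)⁻¹ᵀ, Matrix.sub_mul ((1 - L)⁻¹ᵀ * _), hDN]
    _ = _ := by rw [hinner]

end CommRing

section Asymptotics

variable {𝕜 α : Type*} [NormedField 𝕜] {l : Filter α} {L : α → Matrix ι ι 𝕜}

lemma eventually_isUnit_det_one_sub (hL : Tendsto L l (nhds 0)) :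
    ∀ᶠ m in l, IsUnit (1 - L m).det := by
  have hdet : Continuous fun X : Matrix ι ι 𝕜 => (1 - X).det :=
    (continuous_const.sub continuous_id).matrix_det
  have hlim : Tendsto (fun m => (1 - L m).det) l (nhds 1) := hdet.tendsto' 0 1 (by simp) |>.comp hL
  exact (hlim.eventually_ne one_ne_zero).mono fun m hm => hm.isUnit

lemma isBigO_one_inv_one_sub (hL : Tendsto L l (nhds 0)) :
    (fun m => (1 - L m)⁻¹) =O[l] fun _ => (1 : ℝ) := by
  have hinv : ContinuousAt Inv.inv (1 : Matrix ι ι 𝕜) :=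
    continuousAt_matrix_inv _ <| by
      simpa only [det_one, Ring.inverse_eq_inv'] using continuousAt_inv₀ (one_ne_zero (α := 𝕜))
  have hsub : Tendsto (fun m => 1 - L m) l (nhds 1) := by simpa using hL.const_sub 1
  exact (hinv.tendsto.comp hsub).isBigO_one ℝ

lemma isBigO_cayley_conj_sub {D : Matrix ι ι 𝕜} {M N : α → Matrix ι ι 𝕜} {f : α → ℝ}
    (hskew : ∀ m, (L m)ᵀ = -L m) (hcomm : ∀ m, 2 * (D * L m - L m * D) = N m - M m)
    (hL0 : Tendsto L l (nhds 0)) (hL : L =O[l] f) (hM : M =O[l] f) (hN : N =O[l] f) :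
    (fun m => (cayley (L m))ᵀ * (D + M m) * cayley (L m) - (D + N m)) =O[l] fun m => f m ^ 2 := by
  have hinv := isBigO_one_inv_one_sub hL0
  have hinvT : (fun m => (1 - L m)⁻¹ᵀ) =O[l] fun _ => (1 : ℝ) :=
    .of_norm_left <| by simpa only [Matrix.norm_transpose] using hinv.norm_left
  have hsum := hM.add hN
  have hcubic : (fun m => L m * (M m - N m) * L m) =O[l] fun m => f m * f m := by
    simpa using isBigO_matrix_mul (isBigO_matrix_mul hL (hM.sub hN)) (hL0.isBigO_one ℝ)
  have hinner := ((isBigO_matrix_mul hsum hL).sub (isBigO_matrix_mul hL hsum)).sub hcubic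
  refine (isBigO_matrix_mul (isBigO_matrix_mul hinvT hinner) hinv).congr' ?_ ?_
  · filter_upwards [eventually_isUnit_det_one_sub hL0] with m hm
    exact (cayley_conj_sub (hskew m) hm (hcomm m)).symm
  · exact .of_forall fun m => by ring

end Asymptotics

end Cayley

section Blocks

/-- The solution `L` of `2 (D L - L D) = -H_out`, where `D = Diag μ` and `H_out` is the part of `H`
off the diagonal blocks of `μ`. On the diagonal blocks the denominator vanishes, so that the
convention `x / 0 = 0` makes `L` vanish there. -/
def blockGenerator {ι K : Type*} [Field K] (μ : ι → K) (H : Matrix ι ι K) : Matrix ι ι K :=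
  Matrix.of fun i j => H i j / (2 * (μ j - μ i))

lemma transpose_blockGenerator {ι K : Type*} [Field K] (μ : ι → K) {H : Matrix ι ι K}
    (hH : H.IsSymm) : (blockGenerator μ H)ᵀ = -blockGenerator μ H := by
  ext i j
  simp only [blockGenerator, transpose_apply, of_apply, Matrix.neg_apply, hH.apply i j]
  rw [← neg_sub (μ j), mul_neg, div_neg]

lemma isBigO_blockGenerator {ι α 𝕜 : Type*} [Fintype ι] [NormedField 𝕜] (μ : ι → 𝕜)
    (l : Filter α) (M : α → Matrix ι ι 𝕜) : (fun m => blockGenerator μ (M m)) =O[l] M := by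
  refine isBigO_pi.2 fun i => isBigO_pi.2 fun j => ?_
  have hentry : (fun m => M m i j) =O[l] M :=
    isBigO_pi.1 (isBigO_pi.1 (isBigO_refl M l) i) j
  simpa only [blockGenerator, of_apply, div_eq_inv_mul] using hentry.const_mul_left _

variable {n : ℕ} {μ : Fin n → ℝ}

lemma two_mul_commutator_blockGenerator (μ : Fin n → ℝ) (H : Matrix (Fin n) (Fin n) ℝ) :
    2 * (diagonal μ * blockGenerator μ H - blockGenerator μ H * diagonal μ) = matIn μ H - H := by
  ext i j
  rw [two_mul]
  simp only [Matrix.add_apply, Matrix.sub_apply, diagonal_mul, mul_diagonal, blockGenerator, matIn,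
    of_apply]
  split_ifs with hij
  · simp [hij]
  · have : μ j - μ i ≠ 0 := sub_ne_zero.2 (Ne.symm hij)
    field_simp
    ring

lemma norm_matIn_le (μ : Fin n → ℝ) (H : Matrix (Fin n) (Fin n) ℝ) : ‖matIn μ H‖ ≤ ‖H‖ := by
  refine (Matrix.norm_le_iff (norm_nonneg H)).2 fun i j => ?_
  rw [matIn, of_apply]
  split_ifs
  · exact Matrix.norm_entry_le_entrywise_sup_norm H
  · simp

lemma diagonal_mul_comm_of_block {ι R : Type*} [Fintype ι] [DecidableEq ι] [CommSemiring R]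
    {μ : ι → R} {V : Matrix ι ι R} (hV : ∀ i j, μ i ≠ μ j → V i j = 0) :
    diagonal μ * V = V * diagonal μ := by
  ext i j
  rw [diagonal_mul, mul_diagonal]
  by_cases hij : μ i = μ j
  · rw [hij, mul_comm]
  · simp [hV i j hij]

lemma norm_le_of_isBlockEig {H : Matrix (Fin n) (Fin n) ℝ} {h : Fin n → ℝ}
    (hh : IsBlockEig μ H h) : ‖h‖ ≤ n ^ 2 * ‖H‖ := by
  obtain ⟨-, V, hV, -, hdiag⟩ := hh
  have hV1 := norm_le_one_of_transpose_mul_self_eq_one hV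
  calc ‖h‖ = ‖Vᵀ * matIn μ H * V‖ := by rw [hdiag, Matrix.norm_diagonal]
    _ ≤ n * (‖Vᵀ * matIn μ H‖ * ‖V‖) := by simpa using norm_matrix_mul_le (Vᵀ * matIn μ H) V
    _ ≤ n * (n * (‖Vᵀ‖ * ‖matIn μ H‖) * ‖V‖) := by
        gcongr
        simpa using norm_matrix_mul_le Vᵀ (matIn μ H)
    _ ≤ n * (n * (1 * ‖H‖) * 1) := by
        rw [Matrix.norm_transpose]
        gcongr
        exact norm_matIn_le μ H
    _ = n ^ 2 * ‖H‖ := by ring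

lemma isOrderedSpectrum_of_isBlockEig {H : Matrix (Fin n) (Fin n) ℝ} {h : Fin n → ℝ}
    (hh : IsBlockEig μ H h) (hanti : Antitone (μ + h)) :
    IsOrderedSpectrum (diagonal μ + matIn μ H) (μ + h) := by
  obtain ⟨-, V, hV, hblock, hdiag⟩ := hh
  have hV' : V * Vᵀ = 1 := mul_eq_one_comm.1 hV
  have hμ : V * diagonal μ * Vᵀ = diagonal μ := by
    rw [← diagonal_mul_comm_of_block hblock, Matrix.mul_assoc, hV', Matrix.mul_one]
  have hH : V * diagonal h * Vᵀ = matIn μ H := by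
    rw [← hdiag, ← Matrix.mul_assoc, ← Matrix.mul_assoc, hV', Matrix.one_mul, Matrix.mul_assoc, hV',
      Matrix.mul_one]
  refine ⟨hanti, V, hV, ?_⟩
  rw [Pi.add_def, ← diagonal_add, Matrix.mul_add, Matrix.add_mul, hμ, hH]

lemma eventually_antitone_add {ι α : Type*} [Finite ι] [Preorder ι] {l : Filter α} {μ : ι → ℝ}
    (hμ : Antitone μ) {h : α → ι → ℝ} (hh : ∀ m i j, i ≤ j → μ i = μ j → h m j ≤ h m i)
    (h0 : Tendsto h l (nhds 0)) : ∀ᶠ m in l, Antitone (μ + h m) := by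
  refine eventually_all.2 fun i => eventually_all.2 fun j => ?_
  by_cases hij : μ j < μ i
  · have hlim (k : ι) : Tendsto (fun m => μ k + h m k) l (nhds (μ k)) := by
      simpa using (tendsto_pi_nhds.1 h0 k).const_add (μ k)
    filter_upwards [(hlim j).eventually_lt (hlim i) hij] with m hm _ using hm.le
  · refine .of_forall fun m hle => ?_
    have heq : μ i = μ j := le_antisymm (not_lt.1 hij) (hμ hle)
    simpa [heq] using hh m i j hle heq

lemma eventually_isOrderedSpectrum_of_isBlockEig {α : Type*} {l : Filter α} (hμ : Antitone μ)
    {M : α → Matrix (Fin n) (Fin n) ℝ} (hM0 : Tendsto M l (nhds 0)) {h : α → Fin n → ℝ}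
    (hh : ∀ m, IsBlockEig μ (M m) (h m)) :
    ∀ᶠ m in l, IsOrderedSpectrum (diagonal μ + matIn μ (M m)) (μ + h m) := by
  have h0 : Tendsto h l (nhds 0) :=
    squeeze_zero_norm (fun m => norm_le_of_isBlockEig (hh m)) <| by
      simpa using hM0.norm.const_mul ((n : ℝ) ^ 2)
  filter_upwards [eventually_antitone_add hμ (fun m => (hh m).1) h0] with m hanti
  exact isOrderedSpectrum_of_isBlockEig (hh m) hanti

end Blocks

theorem statement5_general {n : ℕ} {α : Type*} {l : Filter α} (μ : Fin n → ℝ) (hμ : Antitone μ)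
    (lam : Matrix (Fin n) (Fin n) ℝ → Fin n → ℝ) (hlam : IsEigCF lam)
    (M : α → Matrix (Fin n) (Fin n) ℝ) (hMsym : ∀ m, (M m).IsSymm) (hM0 : Tendsto M l (nhds 0))
    (h : α → Fin n → ℝ) (hh : ∀ m, IsBlockEig μ (M m) (h m)) :
    (fun m => lam (Matrix.diagonal μ + M m) - (μ + h m)) =O[l] (fun m => ‖M m‖ ^ 2) := by
  let L m := blockGenerator μ (M m)
  have hL : L =O[l] M := isBigO_blockGenerator μ l M
  have hL0 : Tendsto L l (nhds 0) := hL.trans_tendsto hM0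
  have hskew m : (L m)ᵀ = -L m := transpose_blockGenerator μ (hMsym m)
  have hIn : (fun m => matIn μ (M m)) =O[l] M :=
    .of_bound' <| .of_forall fun m => norm_matIn_le μ (M m)
  have hconj := isBigO_cayley_conj_sub hskew (fun m => two_mul_commutator_blockGenerator μ (M m))
    hL0 hL.norm_right (isBigO_refl M l).norm_right hIn.norm_right
  refine (IsBigO.of_bound n ?_).trans hconj
  filter_upwards [eventually_isUnit_det_one_sub hL0,
    eventually_isOrderedSpectrum_of_isBlockEig hμ hM0 hh] with m hdet hblock
  have hA : IsOrderedSpectrum (diagonal μ + M m) (lam (diagonal μ + M m)) :=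
    hlam _ ((isSymm_diagonal μ).add (hMsym m))
  simpa using (hA.conj (transpose_cayley_mul_cayley (hskew m) hdet)).norm_sub_le hblock

/-- Lemma `lemma:1`. Let `μ ∈ ℝ^n` be nonincreasing, `lam` the map
sending a symmetric matrix to its nonincreasingly ordered eigenvalue vector, and for
each `m` let `h m` be the concatenated vector `(λ(X₁ᵀM_mX₁),…,λ(X_rᵀM_mX_r))` of the
blockwise eigenvalues of `M m` (encoded by `IsBlockEig`). Then for any sequence of
symmetric matrices `M_m → 0`:
`λ(Diag μ + M_m) = μ + h_m + o(‖M_m‖)`. -/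
theorem statement5 {n : ℕ} (μ : Fin n → ℝ) (hμ : Antitone μ)
    (lam : Matrix (Fin n) (Fin n) ℝ → Fin n → ℝ) (hlam : IsEigCF lam)
    (M : ℕ → Matrix (Fin n) (Fin n) ℝ) (hMsym : ∀ m, (M m).IsSymm)
    (hM0 : Tendsto M atTop (nhds 0))
    (h : ℕ → Fin n → ℝ) (hh : ∀ m, IsBlockEig μ (M m) (h m)) :
    (fun m => lam (Matrix.diagonal μ + M m) - (μ + h m)) =o[atTop] (fun m => ‖M m‖) :=
  (statement5_general μ hμ lam hlam M hMsym hM0 h hh).trans_isLittleO <|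
    (isLittleO_pow_id one_lt_two).comp_tendsto (tendsto_zero_iff_norm_tendsto_zero.1 hM0)

end
end

section
/- Let {M_m} be a sequence of n×n symmetric matrices converging to 0 with M_m/‖M_m‖ → M, let μ ∈ ℝ^n with μ₁ ≥ … ≥ μ_n, and let U_m → U be orthogonal matrices with Diag μ + M_m = U_m (Diag λ(Diag μ + M_m)) U_mᵀ for all m, where λ(·) is the vector of eigenvalues in nonincreasing order. Then the limit orthogonal matrix U is block diagonal with respect to the blocks of μ; that is, U^{ij} = 0 whenever μ_i ≠ μ_j. -/
open scoped BigOperators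
open Filter Asymptotics Matrix

attribute [local instance] Matrix.normedAddCommGroup

noncomputable section

/-!
Put `V_m = U_mᵀ`, so that `V_m U_m = 1`. The matrices
`Diag λ(Diag μ + M_m) = V_m (Diag μ + M_m) U_m` converge to `V (Diag μ) U`. Nonincreasing diagonal
matrices form a closed set, so this limit is `Diag ν` with `ν` nonincreasing, and being similar to
`Diag μ` it must be `Diag μ` itself. Hence `U` commutes with `Diag μ`, that is,
`(μ_i - μ_j) U^{ij} = 0`.
-/

theorem eq_of_antitone_of_map_univ_val_eq {ι β : Type*} [Fintype ι] [LinearOrder ι]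
    [PartialOrder β] {f g : ι → β} (hf : Antitone f) (hg : Antitone g)
    (h : Finset.univ.val.map f = Finset.univ.val.map g) : f = g := by
  set s : List ι := Finset.univ.sort (· ≤ ·) with hs
  have sortedGE_map {u : ι → β} (hu : Antitone u) : (s.map u).SortedGE :=
    (List.pairwise_map.2 ((Finset.pairwise_sort _ (· ≤ ·)).imp fun hij => hu hij)).sortedGE
  have hperm : (s.map f).Perm (s.map g) := by
    rwa [← Multiset.coe_eq_coe, ← Multiset.map_coe, ← Multiset.map_coe, hs, Finset.sort_eq]
  have hmap : s.map f = s.map g := hperm.eq_of_sortedGE (sortedGE_map hf) (sortedGE_map hg)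
  funext i
  exact List.map_inj_left.1 hmap i ((Finset.mem_sort _).2 (Finset.mem_univ i))

section Diagonal

variable {ι R : Type*} [Fintype ι] [CommRing R]

theorem roots_charpoly_diagonal [DecidableEq ι] [IsDomain R] (d : ι → R) :
    (diagonal d).charpoly.roots = Finset.univ.val.map d := by
  rw [charpoly_diagonal, Finset.prod_eq_multiset_prod]
  simpa only [Multiset.map_map, Function.comp_def] using
    Polynomial.roots_multiset_prod_X_sub_C (Finset.univ.val.map d)

theorem charpoly_conj_of_mul_eq_one [DecidableEq ι] {U V : Matrix ι ι R} (hUV : U * V = 1)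
    (A : Matrix ι ι R) : (V * A * U).charpoly = A.charpoly := by
  rw [charpoly_mul_comm, ← Matrix.mul_assoc, hUV, Matrix.one_mul]

theorem eq_of_antitone_of_diagonal_eq_conj [LinearOrder ι] [IsDomain R] [PartialOrder R]
    {f g : ι → R} (hf : Antitone f) (hg : Antitone g) {U V : Matrix ι ι R} (hUV : U * V = 1)
    (h : diagonal f = V * diagonal g * U) : f = g := by
  refine eq_of_antitone_of_map_univ_val_eq hf hg ?_
  rw [← roots_charpoly_diagonal, ← roots_charpoly_diagonal, h, charpoly_conj_of_mul_eq_one hUV]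

theorem apply_eq_zero_of_commute_diagonal [DecidableEq ι] [NoZeroDivisors R] {d : ι → R}
    {U : Matrix ι ι R} (h : Commute U (diagonal d)) {i j : ι} (hij : d i ≠ d j) : U i j = 0 := by
  have hentry : U i j * d j = d i * U i j := by
    simpa only [mul_diagonal, diagonal_mul] using congrFun₂ h.eq i j
  have hmul : (d i - d j) * U i j = 0 := by linear_combination -hentry
  exact (mul_eq_zero.1 hmul).resolve_left (sub_ne_zero.2 hij)

end Diagonal

section Limits

variable {ι R α : Type*} [TopologicalSpace R] {l : Filter α}

theorem isClosedEmbedding_diagonal [DecidableEq ι] [Zero R] [T2Space R] :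
    Topology.IsClosedEmbedding (diagonal : (ι → R) → Matrix ι ι R) :=
  Function.LeftInverse.isClosedEmbedding diag_diagonal continuous_matrix_diag
    continuous_id.matrix_diagonal

theorem exists_antitone_of_tendsto_diagonal [DecidableEq ι] [Preorder ι] [Zero R]
    [PartialOrder R] [OrderClosedTopology R] [l.NeBot] {ν : α → ι → R}
    (hν : ∀ a, Antitone (ν a)) {D : Matrix ι ι R}
    (h : Tendsto (fun a => diagonal (ν a)) l (nhds D)) :
    ∃ ν₀, Antitone ν₀ ∧ diagonal ν₀ = D :=
  (isClosedEmbedding_diagonal.isClosedMap _ isClosed_antitone).mem_of_tendsto h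
    (Eventually.of_forall fun a => Set.mem_image_of_mem diagonal (hν a))

theorem tendsto_diagonal_of_eq_conj [Fintype ι] [DecidableEq ι] [Semiring R]
    [IsTopologicalSemiring R] {A U V : α → Matrix ι ι R} {A₀ U₀ V₀ : Matrix ι ι R}
    {ν : α → ι → R} (hA : Tendsto A l (nhds A₀)) (hU : Tendsto U l (nhds U₀))
    (hV : Tendsto V l (nhds V₀)) (hVU : ∀ a, V a * U a = 1)
    (hAU : ∀ a, A a = U a * diagonal (ν a) * V a) :
    Tendsto (fun a => diagonal (ν a)) l (nhds (V₀ * A₀ * U₀)) := by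
  have hdiag (a : α) : diagonal (ν a) = V a * A a * U a := by
    rw [hAU, ← Matrix.mul_assoc, ← Matrix.mul_assoc, hVU, Matrix.one_mul, Matrix.mul_assoc, hVU,
      Matrix.mul_one]
  simpa only [hdiag] using (hV.mul hA).mul hU

theorem statement6_general [Fintype ι] [LinearOrder ι] [CommRing R] [IsDomain R]
    [PartialOrder R] [IsTopologicalSemiring R] [OrderClosedTopology R] [l.NeBot]
    {μ : ι → R} (hμ : Antitone μ) {ν : α → ι → R} (hν : ∀ a, Antitone (ν a))
    {A U V : α → Matrix ι ι R} {U₀ V₀ : Matrix ι ι R}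
    (hA : Tendsto A l (nhds (diagonal μ))) (hU : Tendsto U l (nhds U₀))
    (hV : Tendsto V l (nhds V₀)) (hVU : ∀ a, V a * U a = 1)
    (hAU : ∀ a, A a = U a * diagonal (ν a) * V a) :
    ∀ i j : ι, μ i ≠ μ j → U₀ i j = 0 := by
  have hVU₀ : V₀ * U₀ = 1 :=
    tendsto_nhds_unique (hV.mul hU) (by simp only [hVU, tendsto_const_nhds])
  have hUV₀ : U₀ * V₀ = 1 := mul_eq_one_comm.1 hVU₀
  obtain ⟨ν₀, hν₀, hconj⟩ :=
    exists_antitone_of_tendsto_diagonal hν (tendsto_diagonal_of_eq_conj hA hU hV hVU hAU)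
  obtain rfl : ν₀ = μ := eq_of_antitone_of_diagonal_eq_conj hν₀ hμ hUV₀ hconj
  have hcomm : Commute U₀ (diagonal ν₀) := by
    calc U₀ * diagonal ν₀ = U₀ * (V₀ * diagonal ν₀ * U₀) := by rw [← hconj]
      _ = U₀ * V₀ * diagonal ν₀ * U₀ := by simp only [Matrix.mul_assoc]
      _ = diagonal ν₀ * U₀ := by rw [hUV₀, Matrix.one_mul]
  exact fun i j => apply_eq_zero_of_commute_diagonal hcomm

end Limits

/-- Theorem `important`, part 1. With `M_m → 0` symmetric,
`M_m/‖M_m‖ → M`, `μ` nonincreasing, and orthogonal `U_m → U` satisfying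
`Diag μ + M_m = U_m (Diag λ(Diag μ + M_m)) U_mᵀ`, the limit `U` is block-diagonal
with respect to the blocks of `μ`: `U^{ij} = 0` whenever `μ_i ≠ μ_j`. -/
theorem statement6 {n : ℕ}
    (μ : Fin n → ℝ) (hμ : Antitone μ)
    (lam : Matrix (Fin n) (Fin n) ℝ → Fin n → ℝ) (hlam : IsEigCF lam)
    (M : ℕ → Matrix (Fin n) (Fin n) ℝ) (hMsym : ∀ m, (M m).IsSymm)
    (hM0 : Tendsto M atTop (nhds 0))
    (Mlim : Matrix (Fin n) (Fin n) ℝ)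
    (hMdir : Tendsto (fun m => ‖M m‖⁻¹ • M m) atTop (nhds Mlim))
    (U : ℕ → Matrix (Fin n) (Fin n) ℝ) (hUo : ∀ m, (U m)ᵀ * U m = 1)
    (Ulim : Matrix (Fin n) (Fin n) ℝ) (hUlim : Tendsto U atTop (nhds Ulim))
    (hdec : ∀ m, Matrix.diagonal μ + M m
      = U m * Matrix.diagonal (lam (Matrix.diagonal μ + M m)) * (U m)ᵀ)
    : ∀ i j : Fin n, μ i ≠ μ j → Ulim i j = 0 := by
  exact statement6_general hμ (fun m => (hlam _ ((isSymm_diagonal μ).add (hMsym m))).1)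
    (by simpa only [add_zero] using hM0.const_add (diagonal μ)) hUlim
    ((continuous_id.matrix_transpose.tendsto Ulim).comp hUlim) hUo hdec

end
end

section
/- Let {M_m} be a sequence of n×n symmetric matrices converging to 0 with M_m/‖M_m‖ → M, let μ ∈ ℝ^n with μ₁ ≥ … ≥ μ_n, and let U_m → U be orthogonal matrices with Diag μ + M_m = U_m (Diag λ(Diag μ + M_m)) U_mᵀ for all m. Then for every μ-block-constant k-tensor T on ℝ^n, any n×n matrices H₁,…,H_k, and any permutation σ on {1,…,k}: lim_{m→∞} ((U_m(Diag^σ T)U_mᵀ − Diag^σ T)/‖M_m‖)[H₁,…,H_k] = Σ_{l=1}^k (Diag^{σ_{(l)}} T^{(l)}_out)[H₁,…,H_k, M_out]. -/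
open scoped BigOperators
open Filter Asymptotics Matrix

attribute [local instance] Matrix.normedAddCommGroup

noncomputable section

/-!
Write `(Diag μ + M_m) U_m = U_m Diag L_m`. Comparing entries `(a, b)` gives
`(L_b - μ_a) U_ab = (M U)_ab`, and `L_m → μ` because ordered eigenvalues are continuous; so off
the blocks of `μ` the entries of `U_m` have size `‖M_m‖` with a known leading coefficient. For `f`
constant on the blocks of `μ`, only these entries contribute to the commutator of `U_m` with
`Diag f`, whence `U_m (Diag f) U_mᵀ - Diag f` has as first-order term the Hadamard product of the
direction of `M_m` with the divided differences of `f`. The limit does not depend on which limit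
point of `U_m` in the compact orthogonal group is taken, so it is enough to argue along
ultrafilters.

For tensors, block-constant tensors are spanned by products `f₁ ⊗ ⋯ ⊗ f_k` of block-constant
vectors. Conjugation acts on `Diag^σ (f₁ ⊗ ⋯ ⊗ f_k)` by conjugating each `Diag f_s`, and the
product rule yields one term for each slot `l`.
-/

section SpectralLimits

open scoped Topology

variable {ι d R : Type*}

theorem tendsto_transpose {m n : Type*} [TopologicalSpace R] {l : Filter ι}
    {U : ι → Matrix m n R} {V : Matrix m n R} (hU : Tendsto U l (𝓝 V)) :
    Tendsto (fun x => (U x)ᵀ) l (𝓝 Vᵀ) :=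
  (continuous_id.matrix_transpose.tendsto V).comp hU

variable [Fintype d] [DecidableEq d]

theorem eq_of_antitone_of_diagonal_mul_eq {n : ℕ} [CommRing R] [IsDomain R] [PartialOrder R]
    {μ ν : Fin n → R} {V : Matrix (Fin n) (Fin n) R} (hμ : Antitone μ) (hν : Antitone ν)
    (hV : IsUnit V) (h : diagonal μ * V = V * diagonal ν) : ν = μ := by
  obtain ⟨V, rfl⟩ := hV
  have hcharpoly : (diagonal μ).charpoly = (diagonal ν).charpoly := by
    rw [← charpoly_units_conj V (diagonal ν), ← coe_units_inv, ← h, Units.mul_inv_cancel_right]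
  have hroots : ∀ ξ : Fin n → R, (diagonal ξ).charpoly.roots = (List.ofFn ξ : Multiset R) :=
    fun ξ => by
      rw [charpoly_diagonal, ← Fin.univ_val_map, ← Polynomial.roots_multiset_prod_X_sub_C
        (Multiset.map ξ _), Multiset.map_map]
      rfl
  have hperm : (List.ofFn ν).Perm (List.ofFn μ) := by
    rw [← Multiset.coe_eq_coe, ← hroots, ← hroots, hcharpoly]
  exact List.ofFn_injective (hperm.eq_of_pairwise' hν.sortedGE_ofFn.pairwise
    hμ.sortedGE_ofFn.pairwise)

/-- `A = U (Diag L) Uᵀ` is an orthogonal diagonalization of `A` with eigenvalues listed in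
nonincreasing order. -/
structure IsOrderedDiagonalization {n : ℕ} (A : Matrix (Fin n) (Fin n) ℝ) (L : Fin n → ℝ)
    (U : Matrix (Fin n) (Fin n) ℝ) : Prop where
  antitone : Antitone L
  transpose_mul_self : Uᵀ * U = 1
  eq_conj : A = U * diagonal L * Uᵀ

namespace IsOrderedDiagonalization

variable {n : ℕ} {A U : Matrix (Fin n) (Fin n) ℝ} {L : Fin n → ℝ}

theorem mul_transpose_self (h : IsOrderedDiagonalization A L U) : U * Uᵀ = 1 :=
  mul_eq_one_comm.mp h.transpose_mul_self

theorem mul_eq (h : IsOrderedDiagonalization A L U) : A * U = U * diagonal L := by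
  rw [h.eq_conj, Matrix.mul_assoc, h.transpose_mul_self, Matrix.mul_one]

theorem eigenvalues_eq (h : IsOrderedDiagonalization A L U) : L = (Uᵀ * A * U).diag := by
  rw [Matrix.mul_assoc, h.mul_eq, ← Matrix.mul_assoc, h.transpose_mul_self, Matrix.one_mul,
    diag_diagonal]

theorem isSymm (h : IsOrderedDiagonalization A L U) : A.IsSymm := by
  rw [Matrix.IsSymm, h.eq_conj, transpose_mul, transpose_mul, transpose_transpose,
    diagonal_transpose, Matrix.mul_assoc]

end IsOrderedDiagonalization

theorem commute_diagonal_of_factorsThrough [CommRing R] [NoZeroDivisors R] {μ f : d → R}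
    {V : Matrix d d R} (hV : Commute (diagonal μ) V) (hf : f.FactorsThrough μ) :
    Commute (diagonal f) V := by
  ext a b
  have hab : μ a * V a b = V a b * μ b := by
    simpa only [diagonal_mul, mul_diagonal] using congr_fun₂ hV.eq a b
  rw [diagonal_mul, mul_diagonal]
  by_cases h : μ a = μ b
  · rw [hf h, mul_comm]
  · have : (μ a - μ b) * V a b = 0 := by linear_combination hab
    simp [(mul_eq_zero.mp this).resolve_left (sub_ne_zero.mpr h)]

/-- The matrix of divided differences `(f_b - f_a) / (μ_b - μ_a)`, which governs the derivative
of the matrix function taking `Diag μ` to `Diag f`. Division by zero makes its entries vanish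
when `μ_a = μ_b`. -/
def dividedDiff {K : Type*} [Field K] (μ f : d → K) : Matrix d d K :=
  Matrix.of fun a b => (f b - f a) / (μ b - μ a)

theorem hadamard_dividedDiff_mul {K : Type*} [Field K] {μ f : d → K} (hf : f.FactorsThrough μ)
    {W : Matrix d d K} (hW : Commute (diagonal μ) W) (A : Matrix d d K) :
    (dividedDiff μ f ⊙ A) * W = dividedDiff μ f ⊙ (A * W) := by
  ext a b
  simp only [mul_apply, hadamard_apply, Finset.mul_sum]
  refine Finset.sum_congr rfl fun p _ => ?_
  have hrow : (dividedDiff μ f a).FactorsThrough μ := fun x y hxy => by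
    simp only [dividedDiff, of_apply, hxy, hf hxy]
  have hentry : dividedDiff μ f a p * W p b = W p b * dividedDiff μ f a b := by
    simpa only [diagonal_mul, mul_diagonal] using
      congr_fun₂ (commute_diagonal_of_factorsThrough hW hrow).eq p b
  linear_combination A a p * hentry

theorem tendsto_smul_commutator_diagonal {l : Filter ι} {t : ι → ℝ} {μ f : d → ℝ}
    (hf : f.FactorsThrough μ) {L : ι → d → ℝ} (hL : Tendsto L l (𝓝 μ))
    {M U : ι → Matrix d d ℝ} {N V : Matrix d d ℝ}
    (hM : Tendsto (fun m => t m • M m) l (𝓝 N)) (hU : Tendsto U l (𝓝 V))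
    (hUL : ∀ m, (diagonal μ + M m) * U m = U m * diagonal (L m)) :
    Tendsto (fun m => t m • (U m * diagonal f - diagonal f * U m)) l
      (𝓝 (dividedDiff μ f ⊙ (N * V))) := by
  refine tendsto_pi_nhds.mpr fun a => tendsto_pi_nhds.mpr fun b => ?_
  have hentry : ∀ m, (t m • (U m * diagonal f - diagonal f * U m)) a b
      = (f b - f a) * (t m * U m a b) := fun m => by
    rw [Matrix.smul_apply, Matrix.sub_apply, mul_diagonal, diagonal_mul, smul_eq_mul]
    ring
  simp only [hentry, hadamard_apply, dividedDiff, of_apply]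
  by_cases hab : μ a = μ b
  · simpa [hf hab] using tendsto_const_nhds
  have hgap : μ b - μ a ≠ 0 := sub_ne_zero.mpr (Ne.symm hab)
  have hgaps : Tendsto (fun m => L m b - μ a) l (𝓝 (μ b - μ a)) :=
    ((tendsto_pi_nhds.mp hL) b).sub_const _
  have heq : ∀ m, (L m b - μ a) * U m a b = (M m * U m) a b := fun m => by
    have := congr_fun₂ (hUL m) a b
    rw [Matrix.add_mul, Matrix.add_apply, diagonal_mul, mul_diagonal] at this
    linear_combination -this
  have hMU : Tendsto (fun m => t m * (M m * U m) a b) l (𝓝 ((N * V) a b)) := by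
    simpa only [Matrix.smul_mul, Matrix.smul_apply, smul_eq_mul] using
      tendsto_pi_nhds.mp (tendsto_pi_nhds.mp (hM.mul hU) a) b
  have hquot : Tendsto (fun m => t m * U m a b) l (𝓝 ((N * V) a b / (μ b - μ a))) := by
    refine (hMU.div hgaps hgap).congr' ?_
    filter_upwards [hgaps.eventually_ne hgap] with m hm
    rw [Pi.div_apply, div_eq_iff hm, ← heq]
    ring
  rw [div_mul_eq_mul_div, mul_div_assoc]
  exact hquot.const_mul _

theorem exists_tendsto_of_orthogonal (g : Ultrafilter ι) {U : ι → Matrix d d ℝ}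
    (hU : ∀ m, (U m)ᵀ * U m = 1) : ∃ V, Vᵀ * V = 1 ∧ Tendsto U g (𝓝 V) := by
  have hmem : ∀ m, U m ∈ (Set.Icc (-1 : ℝ) 1).matrix := fun m a b =>
    abs_le.mp (entry_norm_bound_of_unitary (mem_unitaryGroup_iff'.mpr (hU m)) a b)
  obtain ⟨V, -, hV⟩ := (isCompact_Icc.matrix).ultrafilter_le_nhds (g.map U)
    (le_principal_iff.mpr (Eventually.of_forall (f := (g : Filter ι)) hmem))
  have hlim : Tendsto U g (𝓝 V) := hV
  have hmul : Tendsto (fun m => (U m)ᵀ * U m) g (𝓝 (Vᵀ * V)) :=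
    (tendsto_transpose hlim).mul hlim
  simp only [hU] at hmul
  exact ⟨V, tendsto_nhds_unique hmul tendsto_const_nhds, hlim⟩

variable {n : ℕ} {μ f : Fin n → ℝ} {L : ι → Fin n → ℝ} {M U : ι → Matrix (Fin n) (Fin n) ℝ}
  {l : Filter ι}

theorem exists_commute_tendsto_eigenvectors (hμ : Antitone μ) (hM : Tendsto M l (𝓝 0))
    (hU : ∀ m, IsOrderedDiagonalization (diagonal μ + M m) (L m) (U m))
    {g : Ultrafilter ι} (hg : g ≤ l) :
    ∃ V, V * Vᵀ = 1 ∧ Commute (diagonal μ) V ∧ Tendsto U g (𝓝 V) ∧ Tendsto L g (𝓝 μ) := by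
  obtain ⟨V, hV, hUV⟩ := exists_tendsto_of_orthogonal g fun m => (hU m).transpose_mul_self
  have hA : Tendsto (fun m => diagonal μ + M m) g (𝓝 (diagonal μ)) := by
    simpa only [add_zero] using (hM.mono_left hg).const_add (diagonal μ)
  obtain ⟨ν, hLν⟩ : ∃ ν, Tendsto L g (𝓝 ν) := by
    refine ⟨(Vᵀ * diagonal μ * V).diag, ?_⟩
    simp only [funext fun m => (hU m).eigenvalues_eq]
    exact (continuous_id.matrix_diag.tendsto _).comp
      (((tendsto_transpose hUV).mul hA).mul hUV)
  have hanti : Antitone ν :=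
    isClosed_antitone.mem_of_tendsto hLν (Eventually.of_forall fun m => (hU m).antitone)
  have hcomm : diagonal μ * V = V * diagonal ν := by
    refine tendsto_nhds_unique (hA.mul hUV) ?_
    simp only [(hU _).mul_eq]
    exact hUV.mul ((continuous_id.matrix_diagonal.tendsto ν).comp hLν)
  obtain rfl : ν = μ := eq_of_antitone_of_diagonal_mul_eq hμ hanti
    (IsUnit.of_mul_eq_one_right _ hV) hcomm
  exact ⟨V, mul_eq_one_comm.mp hV, hcomm, hUV, hLν⟩

theorem tendsto_conj_diagonal (hμ : Antitone μ) (hM : Tendsto M l (𝓝 0))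
    (hU : ∀ m, IsOrderedDiagonalization (diagonal μ + M m) (L m) (U m))
    (hf : f.FactorsThrough μ) :
    Tendsto (fun m => U m * diagonal f * (U m)ᵀ) l (𝓝 (diagonal f)) := by
  refine (tendsto_iff_ultrafilter _ _ _).mpr fun g hg => ?_
  obtain ⟨V, hV, hcomm, hUV, -⟩ := exists_commute_tendsto_eigenvectors hμ hM hU hg
  have hlim : V * diagonal f * Vᵀ = diagonal f := by
    rw [← (commute_diagonal_of_factorsThrough hcomm hf).eq, Matrix.mul_assoc, hV,
      Matrix.mul_one]
  have hlimit :=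
    (hUV.mul (tendsto_const_nhds (x := diagonal f))).mul (tendsto_transpose hUV)
  rwa [hlim] at hlimit

theorem tendsto_smul_conj_diagonal_sub (hμ : Antitone μ) (hM : Tendsto M l (𝓝 0))
    (hU : ∀ m, IsOrderedDiagonalization (diagonal μ + M m) (L m) (U m))
    {t : ι → ℝ} {N : Matrix (Fin n) (Fin n) ℝ} (hN : Tendsto (fun m => t m • M m) l (𝓝 N))
    (hf : f.FactorsThrough μ) :
    Tendsto (fun m => t m • (U m * diagonal f * (U m)ᵀ - diagonal f)) l
      (𝓝 (dividedDiff μ f ⊙ N)) := by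
  refine (tendsto_iff_ultrafilter _ _ _).mpr fun g hg => ?_
  obtain ⟨V, hV, hcomm, hUV, hL⟩ := exists_commute_tendsto_eigenvectors hμ hM hU hg
  have hcommT : diagonal μ * Vᵀ = Vᵀ * diagonal μ := by
    simpa only [transpose_mul, diagonal_transpose] using (congrArg transpose hcomm.eq).symm
  have hlim : (dividedDiff μ f ⊙ (N * V)) * Vᵀ = dividedDiff μ f ⊙ N := by
    rw [hadamard_dividedDiff_mul hf hcommT, Matrix.mul_assoc, hV, Matrix.mul_one]
  have hcommutator : ∀ m, t m • (U m * diagonal f * (U m)ᵀ - diagonal f)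
      = t m • (U m * diagonal f - diagonal f * U m) * (U m)ᵀ := fun m => by
    rw [Matrix.smul_mul, Matrix.sub_mul, Matrix.mul_assoc (diagonal f),
      (hU m).mul_transpose_self, Matrix.mul_one]
  rw [← hlim]
  refine Tendsto.congr (fun m => (hcommutator m).symm) ?_
  exact (tendsto_smul_commutator_diagonal hf hL (hN.mono_left hg) hUV fun m => (hU m).mul_eq).mul
    (tendsto_transpose hUV)

theorem isSymm_of_tendsto_smul [NeBot l]
    (hU : ∀ m, IsOrderedDiagonalization (diagonal μ + M m) (L m) (U m))
    {t : ι → ℝ} {N : Matrix (Fin n) (Fin n) ℝ} (hN : Tendsto (fun m => t m • M m) l (𝓝 N)) :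
    N.IsSymm := by
  have hM : ∀ m, (M m).IsSymm := fun m => by
    simpa using (hU m).isSymm.sub (isSymm_diagonal μ)
  refine tendsto_nhds_unique (tendsto_transpose hN) ?_
  simpa only [transpose_smul, (hM _).eq] using hN

end SpectralLimits

section Tensors

variable {k n : ℕ}

theorem extPerm_castSucc (σ : Equiv.Perm (Fin k)) (s : Fin k) :
    extPerm σ s.castSucc = (σ s).castSucc := by
  simp [extPerm, Equiv.permCongr]

theorem extPerm_last (σ : Equiv.Perm (Fin k)) : extPerm σ (Fin.last k) = Fin.last k := by
  simp [extPerm, Equiv.permCongr]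

theorem permIns_castSucc_last (σ : Equiv.Perm (Fin k)) (l : Fin k) :
    permIns σ l.castSucc (Fin.last k) = (σ l).castSucc := by
  simp [permIns, extPerm_castSucc]

theorem permIns_castSucc_self (σ : Equiv.Perm (Fin k)) (l : Fin k) :
    permIns σ l.castSucc l.castSucc = Fin.last k := by
  simp [permIns, extPerm_last]

theorem permIns_castSucc_of_ne (σ : Equiv.Perm (Fin k)) {l s : Fin k} (hs : s ≠ l) :
    permIns σ l.castSucc s.castSucc = (σ s).castSucc := by
  have : Equiv.swap l.castSucc (Fin.last k) s.castSucc = s.castSucc :=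
    Equiv.swap_apply_of_ne_of_ne (by simpa using hs) (Fin.castSucc_lt_last s).ne
  simp [permIns, this, extPerm_castSucc]

theorem snoc_eq_snoc_permIns_iff {α : Type*} (σ : Equiv.Perm (Fin k)) (l : Fin k)
    (i j : Fin k → α) (a b : α) :
    (∀ s, Fin.snoc (α := fun _ => α) i a s
        = Fin.snoc (α := fun _ => α) j b (permIns σ l.castSucc s)) ↔
      b = i l ∧ a = j (σ l) ∧ ∀ s, s ≠ l → i s = j (σ s) := by
  have hsplit : (∀ s : Fin k, i s = Fin.snoc (α := fun _ => α) j b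
      (permIns σ l.castSucc s.castSucc)) ↔ b = i l ∧ ∀ s, s ≠ l → i s = j (σ s) := by
    refine ⟨fun h => ⟨?_, fun s hs => ?_⟩, fun ⟨hl, h⟩ s => ?_⟩
    · simpa only [permIns_castSucc_self, Fin.snoc_last] using (h l).symm
    · simpa only [permIns_castSucc_of_ne σ hs, Fin.snoc_castSucc] using h s
    · obtain rfl | hs := eq_or_ne s l
      · rw [permIns_castSucc_self, Fin.snoc_last, hl]
      · rw [permIns_castSucc_of_ne σ hs, Fin.snoc_castSucc, h s hs]
  rw [Fin.forall_fin_succ', permIns_castSucc_last]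
  simp only [Fin.snoc_castSucc, Fin.snoc_last, hsplit]
  tauto

theorem lastApply_diagPerm_permIns (σ : Equiv.Perm (Fin k)) (l : Fin k) (R : Tensor (k + 1) n)
    (N : Matrix (Fin n) (Fin n) ℝ) (i j : Fin k → Fin n) :
    lastApply (diagPerm (permIns σ l.castSucc) R) N i j
      = if ∀ s, s ≠ l → i s = j (σ s) then
          R (Fin.snoc i (j (σ l))) * N (j (σ l)) (i l) else 0 := by
  simp only [lastApply, diagPerm, snoc_eq_snoc_permIns_iff]
  rw [Finset.sum_eq_single (j (σ l)) (by simp +contextual) (by simp),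
    Finset.sum_eq_single (i l) (by simp +contextual) (by simp)]
  simp only [true_and, ite_mul, zero_mul]

theorem sum_eq_sum_snoc {α A : Type*} [Fintype α] [AddCommMonoid A]
    (F : (Fin (k + 1) → α) → A) : ∑ p, F p = ∑ i : Fin k → α, ∑ a, F (Fin.snoc i a) := by
  rw [← Equiv.sum_comp (Fin.snocEquiv fun _ : Fin (k + 1) => α) F, Fintype.sum_prod_type,
    Finset.sum_comm]
  rfl

theorem apply2_snoc (S : Tensor2 (k + 1) n) (H : Fin k → Matrix (Fin n) (Fin n) ℝ)
    (N : Matrix (Fin n) (Fin n) ℝ) : apply2 S (Fin.snoc H N) = apply2 (lastApply S N) H := by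
  unfold apply2 lastApply
  rw [sum_eq_sum_snoc]
  refine Finset.sum_congr rfl fun i _ => ?_
  simp only [sum_eq_sum_snoc (k := k), Finset.sum_mul]
  rw [Finset.sum_comm]
  refine Finset.sum_congr rfl fun j _ => Finset.sum_congr rfl fun a _ =>
    Finset.sum_congr rfl fun b _ => ?_
  simp only [Fin.prod_univ_castSucc, Fin.snoc_castSucc, Fin.snoc_last]
  ring

theorem apply2_sum {ι : Type*} (s : Finset ι) (S : ι → Tensor2 k n)
    (H : Fin k → Matrix (Fin n) (Fin n) ℝ) :
    apply2 (∑ x ∈ s, S x) H = ∑ x ∈ s, apply2 (S x) H := by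
  simp only [apply2, Finset.sum_apply, Finset.sum_mul]
  rw [Finset.sum_comm (s := s)]
  exact Finset.sum_congr rfl fun p _ => Finset.sum_comm

theorem continuous_apply2 (H : Fin k → Matrix (Fin n) (Fin n) ℝ) :
    Continuous fun S : Tensor2 k n => apply2 S H := by
  unfold apply2
  fun_prop

/-- The rank-one tensor `f₁ ⊗ ⋯ ⊗ f_k`. -/
def outerProd (f : Fin k → Fin n → ℝ) : Tensor k n :=
  fun p => ∏ s, f s (p s)

theorem BlockConstant.mem_span_outerProd {μ : Fin n → ℝ} {T : Tensor k n}
    (hT : BlockConstant μ T) :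
    T ∈ Submodule.span ℝ {R : Tensor k n |
      ∃ f : Fin k → Fin n → ℝ, (∀ s, (f s).FactorsThrough μ) ∧ outerProd f = R} := by
  obtain ⟨g, rfl⟩ : ∃ g : (Fin k → ℝ) → ℝ, T = fun p => g (μ ∘ p) :=
    (Function.factorsThrough_iff (f := fun p : Fin k → Fin n => μ ∘ p) T).mp
      fun p q hpq => hT p q (congrFun hpq)
  have hsum : (fun p => g (μ ∘ p)) = ∑ v ∈ Fintype.piFinset fun _ : Fin k =>
      Finset.univ.image μ, g v • outerProd fun s x => if μ x = v s then 1 else 0 := by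
    funext p
    have hprod : ∀ v : Fin k → ℝ,
        outerProd (fun s x => if μ x = v s then 1 else 0) p = if μ ∘ p = v then 1 else 0 :=
      fun v => by
        simp only [outerProd, Finset.prod_ite_zero, Finset.prod_const_one, funext_iff,
          Finset.mem_univ, true_imp_iff, Function.comp_apply]
    simp [Finset.sum_apply, hprod]
  rw [hsum]
  exact Submodule.sum_mem _ fun v _ => Submodule.smul_mem _ _ (Submodule.subset_span
    ⟨_, fun s x y hxy => by simp only [hxy], rfl⟩)

theorem conj2_diagPerm_apply (U : Matrix (Fin n) (Fin n) ℝ) (σ : Equiv.Perm (Fin k))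
    (T : Tensor k n) (i j : Fin k → Fin n) :
    conj2 U (diagPerm σ T) i j = ∑ p, T p * ∏ s, (U (i s) (p s) * U (j (σ s)) (p s)) := by
  refine Finset.sum_congr rfl fun p _ => ?_
  have hiff : ∀ q : Fin k → Fin n, (∀ s, p s = q (σ s)) ↔ p ∘ σ.symm = q := fun q => by
    rw [Equiv.comp_symm_eq, funext_iff]
    rfl
  simp only [diagPerm, hiff, ite_mul, zero_mul, Finset.sum_ite_eq, Finset.mem_univ, if_true,
    Finset.prod_mul_distrib]
  rw [← Equiv.prod_comp σ fun s => U (j s) ((p ∘ σ.symm) s)]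
  simp only [Function.comp_apply, Equiv.symm_apply_apply]

/-- The map `T ↦ U (Diag^σ T) Uᵀ - Diag^σ T`, bundled as linear so that its asymptotics need only
be found on outer products. -/
def conjDefect (U : Matrix (Fin n) (Fin n) ℝ) (σ : Equiv.Perm (Fin k)) :
    Tensor k n →ₗ[ℝ] Tensor2 k n where
  toFun T := conj2 U (diagPerm σ T) - diagPerm σ T
  map_add' T T' := by
    ext i j
    simp only [conj2_diagPerm_apply, Pi.add_apply, Pi.sub_apply, add_mul,
      Finset.sum_add_distrib, diagPerm]
    split_ifs <;> ring
  map_smul' c T := by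
    ext i j
    simp only [conj2_diagPerm_apply, Pi.smul_apply, Pi.sub_apply, smul_eq_mul, mul_assoc,
      ← Finset.mul_sum, diagPerm, RingHom.id_apply]
    split_ifs <;> ring

theorem outDD_apply (μ : Fin n → ℝ) (T : Tensor k n) (l : Fin k) (i : Fin k → Fin n)
    (b : Fin n) :
    outDD μ T l (Fin.snoc i b) = (T (Function.update i l b) - T i) / (μ b - μ (i l)) := by
  simp only [outDD, Fin.snoc_castSucc, Fin.snoc_last]
  split_ifs with h
  · rw [h, sub_self, div_zero]
  · rfl

/-- The map `T ↦ ∑ l, (Diag^{σ_(l)} T^(l)_out)[N_out]`, the first-order term of the conjugation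
defect along a perturbation of `Diag μ` in the direction `N`. -/
def outDeriv (μ : Fin n → ℝ) (σ : Equiv.Perm (Fin k)) (N : Matrix (Fin n) (Fin n) ℝ) :
    Tensor k n →ₗ[ℝ] Tensor2 k n where
  toFun T := ∑ l : Fin k, lastApply (diagPerm (permIns σ l.castSucc) (outDD μ T l)) (matOut μ N)
  map_add' T T' := by
    ext i j
    simp only [Pi.add_apply, Finset.sum_apply, ← Finset.sum_add_distrib]
    refine Finset.sum_congr rfl fun l _ => ?_
    simp only [lastApply_diagPerm_permIns, outDD_apply, Pi.add_apply]
    split_ifs <;> ring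
  map_smul' c T := by
    ext i j
    simp only [Pi.smul_apply, Finset.sum_apply, Finset.smul_sum, RingHom.id_apply]
    refine Finset.sum_congr rfl fun l _ => ?_
    simp only [lastApply_diagPerm_permIns, outDD_apply, Pi.smul_apply, smul_eq_mul]
    split_ifs <;> ring

theorem diagPerm_outerProd (σ : Equiv.Perm (Fin k)) (f : Fin k → Fin n → ℝ)
    (i j : Fin k → Fin n) :
    diagPerm σ (outerProd f) i j = ∏ s, diagonal (f s) (i s) (j (σ s)) := by
  simp only [diagPerm, outerProd, diagonal_apply, Finset.prod_ite_zero, Finset.mem_univ,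
    true_imp_iff]

theorem conj2_diagPerm_outerProd (U : Matrix (Fin n) (Fin n) ℝ) (σ : Equiv.Perm (Fin k))
    (f : Fin k → Fin n → ℝ) (i j : Fin k → Fin n) :
    conj2 U (diagPerm σ (outerProd f)) i j
      = ∏ s, (U * diagonal (f s) * Uᵀ) (i s) (j (σ s)) := by
  simp only [conj2_diagPerm_apply, outerProd, ← Finset.prod_mul_distrib, mul_apply (M := _ * _),
    mul_diagonal, transpose_apply, Fintype.prod_sum]
  exact Finset.sum_congr rfl fun p _ => Finset.prod_congr rfl fun s _ => by ring

theorem outDD_outerProd (μ : Fin n → ℝ) (f : Fin k → Fin n → ℝ) (l : Fin k)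
    (i : Fin k → Fin n) (b : Fin n) :
    outDD μ (outerProd f) l (Fin.snoc i b)
      = dividedDiff μ (f l) (i l) b * ∏ s ∈ Finset.univ.erase l, f s (i s) := by
  have hupdate : outerProd f (Function.update i l b)
      = f l b * ∏ s ∈ Finset.univ.erase l, f s (i s) := by
    rw [outerProd, ← Finset.mul_prod_erase _ _ (Finset.mem_univ l), Function.update_self]
    refine congrArg _ (Finset.prod_congr rfl fun s hs => ?_)
    rw [Function.update_of_ne (Finset.ne_of_mem_erase hs)]
  have hself : outerProd f i = f l (i l) * ∏ s ∈ Finset.univ.erase l, f s (i s) :=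
    (Finset.mul_prod_erase _ _ (Finset.mem_univ l)).symm
  rw [outDD_apply, hupdate, hself, dividedDiff, of_apply]
  ring

theorem dividedDiff_mul_matOut (μ f : Fin n → ℝ) (N : Matrix (Fin n) (Fin n) ℝ) (a b : Fin n) :
    dividedDiff μ f a b * matOut μ N b a = dividedDiff μ f a b * N b a := by
  simp only [dividedDiff, matOut, matIn, Matrix.sub_apply, of_apply]
  split_ifs with h
  · simp [h]
  · rw [sub_zero]

theorem outDeriv_outerProd (μ : Fin n → ℝ) (σ : Equiv.Perm (Fin k))
    {N : Matrix (Fin n) (Fin n) ℝ} (hN : N.IsSymm) (f : Fin k → Fin n → ℝ)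
    (i j : Fin k → Fin n) :
    outDeriv μ σ N (outerProd f) i j
      = ∑ l, (dividedDiff μ (f l) ⊙ N) (i l) (j (σ l)) *
          ∏ s ∈ Finset.univ.erase l, diagonal (f s) (i s) (j (σ s)) := by
  simp only [outDeriv, LinearMap.coe_mk, AddHom.coe_mk, Finset.sum_apply]
  refine Finset.sum_congr rfl fun l _ => ?_
  simp only [lastApply_diagPerm_permIns, outDD_outerProd, diagonal_apply, Finset.prod_ite_zero,
    Finset.mem_erase, Finset.mem_univ, and_true, mul_ite, mul_zero, hadamard_apply]
  rw [mul_right_comm, dividedDiff_mul_matOut, hN.apply]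

end Tensors

section Limits

open scoped Topology

variable {ι : Type*} {l : Filter ι}

theorem tendsto_mul_prod_sub_prod {κ R : Type*} [DecidableEq κ] [CommRing R]
    [TopologicalSpace R] [IsTopologicalRing R] (S : Finset κ) {t : ι → R} {A : ι → κ → R}
    {B D : κ → R} (hA : ∀ s ∈ S, Tendsto (fun m => A m s) l (𝓝 (B s)))
    (hD : ∀ s ∈ S, Tendsto (fun m => t m * (A m s - B s)) l (𝓝 (D s))) :
    Tendsto (fun m => t m * (∏ s ∈ S, A m s - ∏ s ∈ S, B s)) l
      (𝓝 (∑ r ∈ S, D r * ∏ s ∈ S.erase r, B s)) := by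
  induction S using Finset.induction_on with
  | empty => simpa using tendsto_const_nhds
  | insert a S ha ih =>
    have hrest : ∀ s ∈ S, s ∈ insert a S := fun s => Finset.mem_insert_of_mem
    have hstep := ((hD a (Finset.mem_insert_self a S)).mul
      (tendsto_finsetProd S fun s hs => hA s (hrest s hs))).add
      ((ih (fun s hs => hA s (hrest s hs)) fun s hs => hD s (hrest s hs)).const_mul (B a))
    have hlim : D a * ∏ s ∈ S, B s + B a * ∑ r ∈ S, D r * ∏ s ∈ S.erase r, B s
        = ∑ r ∈ insert a S, D r * ∏ s ∈ (insert a S).erase r, B s := by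
      rw [Finset.sum_insert ha, Finset.erase_insert ha, Finset.mul_sum]
      congr 1
      refine Finset.sum_congr rfl fun r hr => ?_
      have har : a ≠ r := fun h => ha (h ▸ hr)
      rw [Finset.erase_insert_of_ne har, Finset.prod_insert (by simp [ha])]
      ring
    rw [hlim] at hstep
    refine hstep.congr fun m => ?_
    rw [Finset.prod_insert ha, Finset.prod_insert ha]
    ring

variable {k n : ℕ} {μ : Fin n → ℝ} {U : ι → Matrix (Fin n) (Fin n) ℝ} {t : ι → ℝ}
  {N : Matrix (Fin n) (Fin n) ℝ}

theorem tendsto_smul_conjDefect_outerProd (hN : N.IsSymm) (σ : Equiv.Perm (Fin k))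
    {f : Fin k → Fin n → ℝ}
    (hconj : ∀ s, Tendsto (fun m => U m * diagonal (f s) * (U m)ᵀ) l (𝓝 (diagonal (f s))))
    (hsub : ∀ s, Tendsto (fun m => t m • (U m * diagonal (f s) * (U m)ᵀ - diagonal (f s))) l
      (𝓝 (dividedDiff μ (f s) ⊙ N))) :
    Tendsto (fun m => t m • conjDefect (U m) σ (outerProd f)) l
      (𝓝 (outDeriv μ σ N (outerProd f))) := by
  refine tendsto_pi_nhds.mpr fun i => tendsto_pi_nhds.mpr fun j => ?_
  have hentry : ∀ m, (t m • conjDefect (U m) σ (outerProd f)) i j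
      = t m * (∏ s, (U m * diagonal (f s) * (U m)ᵀ) (i s) (j (σ s))
        - ∏ s, diagonal (f s) (i s) (j (σ s))) := fun m => by
    rw [← conj2_diagPerm_outerProd, ← diagPerm_outerProd]
    rfl
  simp only [hentry, outDeriv_outerProd μ σ hN]
  exact tendsto_mul_prod_sub_prod Finset.univ
    (fun s _ => tendsto_pi_nhds.mp (tendsto_pi_nhds.mp (hconj s) (i s)) (j (σ s)))
    (fun s _ => tendsto_pi_nhds.mp (tendsto_pi_nhds.mp (hsub s) (i s)) (j (σ s)))

theorem tendsto_smul_conjDefect {L : ι → Fin n → ℝ} {M : ι → Matrix (Fin n) (Fin n) ℝ}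
    (hμ : Antitone μ) (hM : Tendsto M l (𝓝 0))
    (hU : ∀ m, IsOrderedDiagonalization (diagonal μ + M m) (L m) (U m))
    (hN : Tendsto (fun m => t m • M m) l (𝓝 N)) {T : Tensor k n} (hT : BlockConstant μ T)
    (σ : Equiv.Perm (Fin k)) :
    Tendsto (fun m => t m • conjDefect (U m) σ T) l (𝓝 (outDeriv μ σ N T)) := by
  obtain rfl | _ := l.eq_or_neBot
  · exact tendsto_bot
  have hsymm : N.IsSymm := isSymm_of_tendsto_smul hU hN
  have hspan := hT.mem_span_outerProd
  clear hT
  induction hspan using Submodule.span_induction with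
  | mem R hR =>
    obtain ⟨f, hf, rfl⟩ := hR
    exact tendsto_smul_conjDefect_outerProd hsymm σ
      (fun s => tendsto_conj_diagonal hμ hM hU (hf s))
      (fun s => tendsto_smul_conj_diagonal_sub hμ hM hU hN (hf s))
  | zero => simpa only [map_zero, smul_zero] using tendsto_const_nhds
  | add R R' _ _ hR hR' => simpa only [map_add, smul_add] using hR.add hR'
  | smul c R _ hR => simpa only [map_smul, smul_comm _ c] using hR.const_smul c

end Limits

theorem statement9_general {ι : Type*} {l : Filter ι} {n k : ℕ}
    {μ : Fin n → ℝ} (hμ : Antitone μ)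
    {M : ι → Matrix (Fin n) (Fin n) ℝ} (hM : Tendsto M l (nhds 0))
    {t : ι → ℝ} {N : Matrix (Fin n) (Fin n) ℝ} (hN : Tendsto (fun m => t m • M m) l (nhds N))
    {L : ι → Fin n → ℝ} {U : ι → Matrix (Fin n) (Fin n) ℝ}
    (hU : ∀ m, IsOrderedDiagonalization (diagonal μ + M m) (L m) (U m))
    {T : Tensor k n} (hT : BlockConstant μ T)
    (H : Fin k → Matrix (Fin n) (Fin n) ℝ) (σ : Equiv.Perm (Fin k)) :
    Tendsto (fun m => apply2 (t m • (conj2 (U m) (diagPerm σ T) - diagPerm σ T)) H) l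
      (nhds (∑ r : Fin k, apply2 (diagPerm (permIns σ r.castSucc) (outDD μ T r))
        (Fin.snoc H (matOut μ N)))) := by
  simp only [apply2_snoc, ← apply2_sum]
  exact ((continuous_apply2 H).tendsto _).comp (tendsto_smul_conjDefect hμ hM hU hN hT σ)

/-- Theorem `dec14b`. With `M_m → 0` symmetric, `M_m/‖M_m‖ → M`, `μ`
nonincreasing, and orthogonal `U_m → U` satisfying
`Diag μ + M_m = U_m (Diag λ(Diag μ + M_m)) U_mᵀ`: for every `μ`-block-constant
`k`-tensor `T`, matrices `H₁,…,H_k`, and permutation `σ` of `{1,…,k}`,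
`lim_m ((U_m(Diag^σ T)U_mᵀ − Diag^σ T)/‖M_m‖)[H₁,…,H_k]
  = ∑_{l=1}^k (Diag^{σ_{(l)}} T^{(l)}_out)[H₁,…,H_k, M_out]`. -/
theorem statement9 {n k : ℕ}
    (μ : Fin n → ℝ) (hμ : Antitone μ)
    (lam : Matrix (Fin n) (Fin n) ℝ → Fin n → ℝ) (hlam : IsEigCF lam)
    (M : ℕ → Matrix (Fin n) (Fin n) ℝ) (hMsym : ∀ m, (M m).IsSymm)
    (hM0 : Tendsto M atTop (nhds 0))
    (Mlim : Matrix (Fin n) (Fin n) ℝ)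
    (hMdir : Tendsto (fun m => ‖M m‖⁻¹ • M m) atTop (nhds Mlim))
    (U : ℕ → Matrix (Fin n) (Fin n) ℝ) (hUo : ∀ m, (U m)ᵀ * U m = 1)
    (Ulim : Matrix (Fin n) (Fin n) ℝ) (hUlim : Tendsto U atTop (nhds Ulim))
    (hdec : ∀ m, Matrix.diagonal μ + M m
      = U m * Matrix.diagonal (lam (Matrix.diagonal μ + M m)) * (U m)ᵀ)
    (T : Tensor k n) (hT : BlockConstant μ T)
    (H : Fin k → Matrix (Fin n) (Fin n) ℝ) (σ : Equiv.Perm (Fin k))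
    : Tendsto
        (fun m => apply2 (‖M m‖⁻¹ • (conj2 (U m) (diagPerm σ T) - diagPerm σ T)) H)
        atTop
        (nhds (∑ l : Fin k,
          apply2 (diagPerm (permIns σ l.castSucc) (outDD μ T l))
            (Fin.snoc H (matOut μ Mlim)))) := by
  exact statement9_general hμ hM0 hMdir
    (fun m => ⟨(hlam _ ((isSymm_diagonal μ).add (hMsym m))).1, hUo m, hdec m⟩) hT H σ

end
end
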